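/- Fix an integer r ≥ 1. Then R̃_3(rK_2; 4r − 2) ≤ 5r − 4. Equivalently: Builder has a strategy that, playing on K_{4r−2} with 3 colors, guarantees within 5r − 4 moves that some color class contains r pairwise disjoint edges, against every Painter strategy. -/

import Mathlib

open Finset

/-- Two edges of a complete graph (elements of `Sym2 (Fin n)`) are disjoint if they
share no vertex. -/
def EdgeDisjoint {n : ℕ} (e f : Sym2 (Fin n)) : Prop := ∀ v, v ∈ e → v ∉ f

/-- A finite set of elements of `Sym2 (Fin n)` is a matching if each element is a genuine
(non-loop) edge and the edges are pairwise disjoint. -/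
def IsMatchingIn {n : ℕ} (M : Finset (Sym2 (Fin n))) : Prop :=
  (∀ e ∈ M, ¬ e.IsDiag) ∧ (M : Set (Sym2 (Fin n))).Pairwise EdgeDisjoint

/-- A history of the online Ramsey game on `K_n` with `t` colours: the list of
edges played so far, each together with the colour Painter gave it. -/
abbrev GameHistory (n t : ℕ) := List (Sym2 (Fin n) × Fin t)

/-- A Builder strategy: given the history so far, select the next edge. -/
abbrev BuilderStrategy (n t : ℕ) := GameHistory n t → Sym2 (Fin n)

/-- A Painter strategy: given the history so far and the newly selected edge,
choose a colour for it. -/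
abbrev PainterStrategy (n t : ℕ) := GameHistory n t → Sym2 (Fin n) → Fin t

/-- The history after `k` moves when Builder plays strategy `B` against Painter
strategy `P`. -/
def gamePlay {n t : ℕ} (B : BuilderStrategy n t) (P : PainterStrategy n t) :
    ℕ → GameHistory n t
  | 0 => []
  | k + 1 =>
      let h := gamePlay B P k
      h ++ [(B h, P h (B h))]

/-- Builder plays legally for the first `k` moves against `P`: every selected edge
is a genuine (non-loop) edge not selected before. -/
def BuilderValid {n t : ℕ} (B : BuilderStrategy n t) (P : PainterStrategy n t)
    (k : ℕ) : Prop :=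
  ∀ j < k, ¬ (B (gamePlay B P j)).IsDiag ∧
    B (gamePlay B P j) ∉ (gamePlay B P j).map Prod.fst

/-- The history `h` contains, for some colour `i`, a matching of `r i` edges all
coloured `i`. -/
def HistoryHasMatching (n t : ℕ) (r : Fin t → ℕ) (h : GameHistory n t) : Prop :=
  ∃ i : Fin t, ∃ M : Finset (Sym2 (Fin n)),
    M.card = r i ∧ IsMatchingIn M ∧ ∀ e ∈ M, (e, i) ∈ h

/-- Builder can force, within `k` legal moves on `K_n` with `t` colours, some colour
`i` to contain a matching of `r i` edges, against every Painter strategy. -/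
def BuilderWinsIn (n t : ℕ) (r : Fin t → ℕ) (k : ℕ) : Prop :=
  ∃ B : BuilderStrategy n t, (∀ P : PainterStrategy n t, BuilderValid B P k) ∧
    ∀ P : PainterStrategy n t, HistoryHasMatching n t r (gamePlay B P k)

/-- The restricted online Ramsey number `R̃(r₁K₂,…,r_tK₂; n)`: the least `k` such
that Builder can force a win within `k` moves. -/
noncomputable def restrictedOnlineRamsey (n t : ℕ) (r : Fin t → ℕ) : ℕ :=
  sInf {k | BuilderWinsIn n t r k}

/-- A colouring `c` of (the edges of) `K_N` with `t` colours contains, for some colour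
`i`, a matching of `r i` edges all coloured `i`. -/
def ColoringHasMatching (N t : ℕ) (r : Fin t → ℕ) (c : Sym2 (Fin N) → Fin t) : Prop :=
  ∃ i : Fin t, ∃ M : Finset (Sym2 (Fin N)),
    M.card = r i ∧ IsMatchingIn M ∧ ∀ e ∈ M, c e = i

/-- The classical Ramsey number `R(r₁K₂,…,r_tK₂)`: the least `N` such that every
`t`-colouring of the edges of `K_N` contains, for some `i`, a matching of `r i`
edges in colour `i`. -/
noncomputable def matchingRamsey (t : ℕ) (r : Fin t → ℕ) : ℕ :=
  sInf {N | ∀ c : Sym2 (Fin N) → Fin t, ColoringHasMatching N t r c}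

/-- Builder can force a win within `m` further moves from the history `h`. -/
def Wins (n t : ℕ) (r : Fin t → ℕ) : ℕ → GameHistory n t → Prop
  | 0, h => HistoryHasMatching n t r h
  | m + 1, h => HistoryHasMatching n t r h ∨
      ∃ e : Sym2 (Fin n), ¬ e.IsDiag ∧ e ∉ h.map Prod.fst ∧ ∀ c, Wins n t r m (h ++ [(e, c)])

lemma hasMatching_append {n t : ℕ} {r : Fin t → ℕ} {h : GameHistory n t}
    (H : HistoryHasMatching n t r h) (l : GameHistory n t) :
    HistoryHasMatching n t r (h ++ l) := by
  obtain ⟨i, M, h1, h2, h3⟩ := H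
  exact ⟨i, M, h1, h2, fun e he => List.mem_append_left _ (h3 e he)⟩

lemma wins_of_has {n t : ℕ} {r : Fin t → ℕ} {h : GameHistory n t}
    (H : HistoryHasMatching n t r h) (m : ℕ) : Wins n t r m h := by
  cases m with
  | zero => exact H
  | succ m => exact Or.inl H

lemma exists_fresh {n t : ℕ} (h : GameHistory n t) (hl : h.length < n.choose 2) :
    ∃ e : Sym2 (Fin n), ¬ e.IsDiag ∧ e ∉ h.map Prod.fst := by
  by_contra! H
  have hc : Fintype.card {e : Sym2 (Fin n) // ¬ e.IsDiag} = n.choose 2 := by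
    rw [Sym2.card_subtype_not_diag, Fintype.card_fin]
  rw [Fintype.card_subtype] at hc
  have h2 : (Finset.univ.filter fun e : Sym2 (Fin n) => ¬ e.IsDiag) ⊆ (h.map Prod.fst).toFinset := by
    intro e he
    rw [List.mem_toFinset]
    exact H e (Finset.mem_filter.1 he).2
  have h3 := Finset.card_le_card h2
  have h4 := List.toFinset_card_le (h.map Prod.fst)
  rw [List.length_map] at h4
  omega

/-- If Builder still wins, there is a legal move after which he still wins. -/
lemma wins_step {n t : ℕ} {r : Fin t → ℕ} {h : GameHistory n t} {m : ℕ}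
    (hl : h.length < n.choose 2) (H : Wins n t r (m + 1) h) :
    ∃ e : Sym2 (Fin n), ¬ e.IsDiag ∧ e ∉ h.map Prod.fst ∧ ∀ c, Wins n t r m (h ++ [(e, c)]) := by
  rcases H with H | H
  · obtain ⟨e, h1, h2⟩ := exists_fresh h hl
    exact ⟨e, h1, h2, fun c => wins_of_has (hasMatching_append H _) m⟩
  · exact H

lemma gamePlay_length {n t : ℕ} (B : BuilderStrategy n t) (P : PainterStrategy n t) (j : ℕ) :
    (gamePlay B P j).length = j := by
  induction j with
  | zero => rfl
  | succ j ih => simp [gamePlay, ih]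

lemma builderWins_of_wins {n t : ℕ} {r : Fin t → ℕ} {k : ℕ} (hk : k ≤ n.choose 2)
    (hn : Nonempty (Sym2 (Fin n)))
    (H : Wins n t r k []) : BuilderWinsIn n t r k := by
  classical
  have key : ∀ h : GameHistory n t, ∃ e : Sym2 (Fin n),
      h.length < k → Wins n t r (k - h.length) h →
      (¬ e.IsDiag ∧ e ∉ h.map Prod.fst ∧
        ∀ c, Wins n t r (k - (h.length + 1)) (h ++ [(e, c)])) := by
    intro h
    by_cases h1 : h.length < k ∧ Wins n t r (k - h.length) h
    · obtain ⟨h1, h2⟩ := h1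
      have : k - h.length = (k - (h.length + 1)) + 1 := by omega
      rw [this] at h2
      obtain ⟨e, he⟩ := wins_step (by omega) h2
      exact ⟨e, fun _ _ => he⟩
    · exact ⟨hn.some, fun a b => absurd ⟨a, b⟩ h1⟩
  choose B hB using key
  have inv : ∀ P : PainterStrategy n t, ∀ j ≤ k, Wins n t r (k - j) (gamePlay B P j) := by
    intro P j
    induction j with
    | zero => intro _; exact H
    | succ j ih =>
      intro hj
      have h1 := hB (gamePlay B P j)
      rw [gamePlay_length] at h1
      exact (h1 (by omega) (ih (by omega))).2.2 _
  refine ⟨B, fun P j hj => ?_, fun P => ?_⟩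
  · have h1 := hB (gamePlay B P j)
    rw [gamePlay_length] at h1
    have h2 := h1 hj (inv P j hj.le)
    exact ⟨h2.1, h2.2.1⟩
  · have := inv P k le_rfl
    rwa [Nat.sub_self] at this

/-- The invariant: on the remaining vertex set `V` (of size `4s-2`) the selected edges form a
matching `M`, and outside `V` every colour has a matching of size `r - s`. -/
structure St {n : ℕ} (r s : ℕ) (h : GameHistory n 3) (V : Finset (Fin n))
    (M : Finset (Sym2 (Fin n))) (col : Sym2 (Fin n) → Fin 3) : Prop where
  hV : V.card + 2 = 4 * s
  hM : IsMatchingIn M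
  hMV : ∀ e ∈ M, ∀ v ∈ e, v ∈ V
  hcol : ∀ e ∈ M, (e, col e) ∈ h
  hfresh : ∀ e c, (e, c) ∈ h → (∀ v ∈ e, v ∈ V) → e ∈ M
  hO : ∀ i, ∃ O : Finset (Sym2 (Fin n)), O.card + s = r ∧ IsMatchingIn O ∧
    (∀ e ∈ O, (e, i) ∈ h) ∧ ∀ e ∈ O, ∀ v ∈ e, v ∉ V

lemma edge_ne_of_vert {n : ℕ} {M : Finset (Sym2 (Fin n))} (hM : IsMatchingIn M)
    {e f : Sym2 (Fin n)} (he : e ∈ M) (hf : f ∈ M) {v : Fin n} (hve : v ∈ e) (hvf : v ∈ f) :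
    e = f := by
  by_contra hne
  exact hM.2 (Finset.mem_coe.2 he) (Finset.mem_coe.2 hf) hne v hve hvf

lemma matching_union {n : ℕ} {V : Finset (Fin n)} {A B : Finset (Sym2 (Fin n))}
    (hA : IsMatchingIn A) (hB : IsMatchingIn B)
    (hAV : ∀ e ∈ A, ∀ v ∈ e, v ∉ V) (hBV : ∀ e ∈ B, ∀ v ∈ e, v ∈ V) :
    IsMatchingIn (A ∪ B) ∧ (A ∪ B).card = A.card + B.card := by
  refine ⟨⟨?_, ?_⟩, ?_⟩
  · intro e he
    rcases Finset.mem_union.1 he with he | he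
    · exact hA.1 e he
    · exact hB.1 e he
  · intro e he f hf hne v hve hvf
    rcases Finset.mem_union.1 (Finset.mem_coe.1 he) with he | he <;>
      rcases Finset.mem_union.1 (Finset.mem_coe.1 hf) with hf | hf
    · exact hne (edge_ne_of_vert hA he hf hve hvf)
    · exact hAV e he v hve (hBV f hf v hvf)
    · exact hAV f hf v hvf (hBV e he v hve)
    · exact hne (edge_ne_of_vert hB he hf hve hvf)
  · rw [Finset.card_union_of_disjoint]
    rw [Finset.disjoint_left]
    intro e he hf
    exact hAV e he _ (Sym2.out_fst_mem e) (hBV e hf _ (Sym2.out_fst_mem e))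

/-- The statement that Builder wins with `m` moves from every state with enough budget. -/
def Good (n r m : ℕ) : Prop := ∀ (s : ℕ) (h : GameHistory n 3) (V : Finset (Fin n))
    (M : Finset (Sym2 (Fin n))) (col : Sym2 (Fin n) → Fin 3), 1 ≤ s → St r s h V M col →
    5 * s ≤ m + M.card + 4 → Wins n 3 (fun _ => r) m h

/-- Removing four vertices that carry all three colours. -/
lemma reduce {n r s m : ℕ} {h h' : GameHistory n 3} {V : Finset (Fin n)}
    {M : Finset (Sym2 (Fin n))} {col : Sym2 (Fin n) → Fin 3} (hs : 2 ≤ s)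
    (st : St r s h V M col) (hG : Good n r m)
    (e1 e2 e3 : Sym2 (Fin n)) (he1 : e1 ∈ M) (he2 : e2 ∈ M) (he3 : e3 ∈ M)
    (R : Finset (Fin n)) (hR : R.card = 4)
    (hRe : ∀ v ∈ R, v ∈ e1 ∨ v ∈ e2 ∨ v ∈ e3)
    (hsub : ∀ x ∈ h, x ∈ h') (hnew : ∀ e c, (e, c) ∈ h' → (e, c) ∈ h ∨ ∃ v ∈ e, v ∈ R)
    (hi : ∀ i, ∃ e : Sym2 (Fin n), (e, i) ∈ h' ∧ ¬ e.IsDiag ∧ ∀ v ∈ e, v ∈ R)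
    (hm : 5 * s ≤ m + 2 + M.card + 4) : Wins n 3 (fun _ => r) m h' := by
  classical
  have hRV : R ⊆ V := by
    intro v hv
    rcases hRe v hv with h1 | h1 | h1
    · exact st.hMV _ he1 v h1
    · exact st.hMV _ he2 v h1
    · exact st.hMV _ he3 v h1
  have hVc : (V \ R).card + R.card = V.card := Finset.card_sdiff_add_card_eq_card hRV
  set M' := M.filter (fun e => ∀ v ∈ e, v ∈ V \ R) with hM'
  have hMM : M ⊆ M' ∪ {e1, e2, e3} := by
    intro e he
    by_cases hh : ∀ v ∈ e, v ∈ V \ R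
    · exact Finset.mem_union_left _ (Finset.mem_filter.2 ⟨he, hh⟩)
    · push Not at hh
      obtain ⟨v, hve, hv⟩ := hh
      have hvR : v ∈ R := by
        by_contra hvR
        exact hv (Finset.mem_sdiff.2 ⟨st.hMV e he v hve, hvR⟩)
      apply Finset.mem_union_right
      rcases hRe v hvR with h1 | h1 | h1
      · simp [edge_ne_of_vert st.hM he he1 hve h1]
      · simp [edge_ne_of_vert st.hM he he2 hve h1]
      · simp [edge_ne_of_vert st.hM he he3 hve h1]
  have hcard : M.card ≤ M'.card + 3 :=
    (Finset.card_le_card hMM).trans ((Finset.card_union_le _ _).trans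
      (Nat.add_le_add_left Finset.card_le_three _))
  refine hG (s - 1) h' (V \ R) M' col (by omega) ?_ (by omega)
  refine ⟨?_, ?_, ?_, ?_, ?_, ?_⟩
  · have := st.hV
    omega
  · exact ⟨fun e he => st.hM.1 e (Finset.mem_filter.1 he).1,
      st.hM.2.mono (Finset.coe_subset.2 (Finset.filter_subset _ _))⟩
  · intro e he
    exact (Finset.mem_filter.1 he).2
  · intro e he
    exact hsub _ (st.hcol e (Finset.mem_filter.1 he).1)
  · intro e c hec hv
    rcases hnew e c hec with h1 | ⟨v, h1, h2⟩
    · refine Finset.mem_filter.2 ⟨st.hfresh e c h1 fun v hve => ?_, hv⟩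
      exact (Finset.mem_sdiff.1 (hv v hve)).1
    · exact absurd h2 (Finset.mem_sdiff.1 (hv v h1)).2
  · intro i
    obtain ⟨O, o1, o2, o3, o4⟩ := st.hO i
    obtain ⟨e, f1, f2, f3⟩ := hi i
    have hs1 : IsMatchingIn ({e} : Finset (Sym2 (Fin n))) := by
      constructor
      · intro e' he'
        rw [Finset.mem_singleton.1 he']
        exact f2
      · simp
    obtain ⟨u1, u2⟩ := matching_union (V := V) o2 hs1 o4 (by
      intro e' he' v hv
      rw [Finset.mem_singleton.1 he'] at hv
      exact hRV (f3 v hv))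
    refine ⟨O ∪ {e}, ?_, u1, ?_, ?_⟩
    · rw [u2, Finset.card_singleton]
      omega
    · intro e' he'
      rcases Finset.mem_union.1 he' with h1 | h1
      · exact hsub _ (o3 e' h1)
      · rw [Finset.mem_singleton.1 h1]
        exact f1
    · intro e' he' v hv hvV
      rw [Finset.mem_sdiff] at hvV
      rcases Finset.mem_union.1 he' with h1 | h1
      · exact o4 e' h1 v hv hvV.1
      · rw [Finset.mem_singleton.1 h1] at hv
        exact hvV.2 (f3 v hv)

lemma fin3_cases {a b c : Fin 3} (hab : a ≠ b) (hac : a ≠ c) (hbc : b ≠ c) (i : Fin 3) :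
    i = a ∨ i = b ∨ i = c := by
  revert a b c i
  decide

/-- An edge joining two different matching edges is fresh. -/
lemma fresh_cross {n r s : ℕ} {h : GameHistory n 3} {V : Finset (Fin n)}
    {M : Finset (Sym2 (Fin n))} {col : Sym2 (Fin n) → Fin 3}
    (st : St r s h V M col) {e f : Sym2 (Fin n)} (he : e ∈ M) (hf : f ∈ M) (hne : e ≠ f)
    {x y : Fin n} (hx : x ∈ e) (hy : y ∈ f) : s(x, y) ∉ h.map Prod.fst := by
  intro hmem
  obtain ⟨⟨g, c⟩, hg, hge⟩ := List.mem_map.1 hmem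
  simp only at hge
  subst hge
  have hM := st.hfresh _ c hg (by
    intro v hv
    rcases Sym2.mem_iff.1 hv with rfl | rfl
    · exact st.hMV e he _ hx
    · exact st.hMV f hf _ hy)
  have h1 := edge_ne_of_vert st.hM hM he (Sym2.mem_mk_left x y) hx
  have h2 := edge_ne_of_vert st.hM hM hf (Sym2.mem_mk_right x y) hy
  exact hne (h1.symm.trans h2)

/-- Second move of the gadget. -/
lemma gadget2 {n r s m : ℕ} {h : GameHistory n 3} {V : Finset (Fin n)}
    {M : Finset (Sym2 (Fin n))} {col : Sym2 (Fin n) → Fin 3} (hs : 2 ≤ s)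
    (st : St r s h V M col) (hG : Good n r m) (x x' y y' z z' : Fin n) (a b c : Fin 3)
    (hab : a ≠ b) (hac : a ≠ c) (hbc : b ≠ c)
    (h1 : s(x, x') ∈ M) (h2 : s(y, y') ∈ M) (h3 : s(z, z') ∈ M)
    (hd : [x, x', y, y', z, z'].Nodup)
    (c2 : (s(y, y'), b) ∈ h) (c3 : (s(z, z'), c) ∈ h)
    (f : Sym2 (Fin n)) (hf : f = s(x, y))
    (hm : 5 * s ≤ m + 2 + M.card + 4) :
    Wins n 3 (fun _ => r) (m + 1) (h ++ [(f, a)]) := by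
  classical
  subst hf
  simp only [List.nodup_cons, List.mem_cons, List.not_mem_nil, or_false, not_or] at hd
  obtain ⟨⟨d1, d2, d3, d4, d5⟩, ⟨d6, d7, d8, d9⟩, ⟨d10, d11, d12⟩, ⟨d13, d14⟩, d15, -⟩ := hd
  refine Or.inr ⟨s(y, z), ?_, ?_, ?_⟩
  · simpa using d11
  · have hfr := fresh_cross st h2 h3 (by
      intro hh
      have : y ∈ s(z, z') := hh ▸ Sym2.mem_mk_left y y'
      rcases Sym2.mem_iff.1 this with h | h
      · exact d11 h
      · exact d12 h) (Sym2.mem_mk_left y y') (Sym2.mem_mk_left z z')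
    rw [List.map_append, List.mem_append]
    rintro (hh | hh)
    · exact hfr hh
    · simp only [List.map_cons, List.map_nil, List.mem_singleton] at hh
      have : z ∈ s(x, y) := hh ▸ Sym2.mem_mk_right y z
      rcases Sym2.mem_iff.1 this with h | h
      · exact d4 h.symm
      · exact d11 h.symm
  · intro d
    have hsub : ∀ p ∈ h, p ∈ h ++ [(s(x, y), a)] ++ [(s(y, z), d)] := by
      intro p hp
      simp [hp]
    have mxy : (s(x, y), a) ∈ h ++ [(s(x, y), a)] ++ [(s(y, z), d)] := by simp
    have myz : (s(y, z), d) ∈ h ++ [(s(x, y), a)] ++ [(s(y, z), d)] := by simp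
    have hnew : ∀ R : Finset (Fin n), y ∈ R → ∀ e k,
        (e, k) ∈ h ++ [(s(x, y), a)] ++ [(s(y, z), d)] → (e, k) ∈ h ∨ ∃ v ∈ e, v ∈ R := by
      intro R hy e k hek
      simp only [List.mem_append, List.mem_singleton, Prod.mk.injEq] at hek
      rcases hek with (hek | ⟨rfl, -⟩) | ⟨rfl, -⟩
      · exact Or.inl hek
      · exact Or.inr ⟨y, by simp, hy⟩
      · exact Or.inr ⟨y, by simp, hy⟩
    rcases fin3_cases hab hac hbc d with rfl | rfl | rfl
    · refine reduce hs st hG _ _ _ h1 h2 h3 {y, y', z, z'} ?_ ?_ hsub (hnew _ (by simp)) ?_ hm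
      · simp [*]
      · intro v hv
        simp only [Finset.mem_insert, Finset.mem_singleton] at hv
        simp only [Sym2.mem_iff]
        tauto
      · intro i
        rcases fin3_cases hab hac hbc i with rfl | rfl | rfl
        · exact ⟨_, myz, by simpa using d11, by simp⟩
        · exact ⟨_, hsub _ c2, by simpa using d10, by simp⟩
        · exact ⟨_, hsub _ c3, by simpa using d15, by simp⟩
    · refine reduce hs st hG _ _ _ h1 h2 h3 {x, y, z, z'} ?_ ?_ hsub (hnew _ (by simp)) ?_ hm
      · simp [*]
      · intro v hv
        simp only [Finset.mem_insert, Finset.mem_singleton] at hv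
        simp only [Sym2.mem_iff]
        tauto
      · intro i
        rcases fin3_cases hab hac hbc i with rfl | rfl | rfl
        · exact ⟨_, mxy, by simpa using d2, by simp⟩
        · exact ⟨_, myz, by simpa using d11, by simp⟩
        · exact ⟨_, hsub _ c3, by simpa using d15, by simp⟩
    · refine reduce hs st hG _ _ _ h1 h2 h3 {x, y, y', z} ?_ ?_ hsub (hnew _ (by simp)) ?_ hm
      · simp [*]
      · intro v hv
        simp only [Finset.mem_insert, Finset.mem_singleton] at hv
        simp only [Sym2.mem_iff]
        tauto
      · intro i
        rcases fin3_cases hab hac hbc i with rfl | rfl | rfl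
        · exact ⟨_, mxy, by simpa using d2, by simp⟩
        · exact ⟨_, hsub _ c2, by simpa using d10, by simp⟩
        · exact ⟨_, myz, by simpa using d11, by simp⟩

/-- The gadget: three matching edges of three different colours. -/
lemma gadget {n r s m : ℕ} {h : GameHistory n 3} {V : Finset (Fin n)}
    {M : Finset (Sym2 (Fin n))} {col : Sym2 (Fin n) → Fin 3} (hs : 2 ≤ s)
    (st : St r s h V M col) (hG : Good n r m) (hG1 : Good n r (m + 1))
    (x x' y y' z z' : Fin n) (a b c : Fin 3)
    (hab : a ≠ b) (hac : a ≠ c) (hbc : b ≠ c)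
    (h1 : s(x, x') ∈ M) (h2 : s(y, y') ∈ M) (h3 : s(z, z') ∈ M)
    (hd : [x, x', y, y', z, z'].Nodup)
    (c1 : (s(x, x'), a) ∈ h) (c2 : (s(y, y'), b) ∈ h) (c3 : (s(z, z'), c) ∈ h)
    (hm : 5 * s ≤ m + 2 + M.card + 4) :
    Wins n 3 (fun _ => r) (m + 2) h := by
  classical
  have hd0 := hd
  simp only [List.nodup_cons, List.mem_cons, List.not_mem_nil, or_false, not_or] at hd
  obtain ⟨⟨d1, d2, d3, d4, d5⟩, ⟨d6, d7, d8, d9⟩, ⟨d10, d11, d12⟩, ⟨d13, d14⟩, d15, -⟩ := hd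
  refine Or.inr ⟨s(x, y), by simpa using d2, ?_, ?_⟩
  · refine fresh_cross st h1 h2 ?_ (Sym2.mem_mk_left x x') (Sym2.mem_mk_left y y')
    intro hh
    have : x ∈ s(y, y') := hh ▸ Sym2.mem_mk_left x x'
    rcases Sym2.mem_iff.1 this with h | h
    · exact d2 h
    · exact d3 h
  · intro d
    rcases fin3_cases hab hac hbc d with rfl | rfl | rfl
    · exact gadget2 hs st hG x x' y y' z z' d b c hab hac hbc h1 h2 h3 hd0 c2 c3 _ rfl hm
    · refine gadget2 hs st hG y y' x x' z z' d a c hab.symm hbc hac h2 h1 h3 ?_ c1 c3 _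
        Sym2.eq_swap hm
      simp only [List.nodup_cons, List.mem_cons, List.not_mem_nil, or_false, not_or]
      grind
    · refine reduce hs st hG1 _ _ _ h1 h2 h3 {x, x', y, y'} ?_ ?_
        (fun p hp => List.mem_append_left _ hp) ?_ ?_ (by omega)
      · simp [*]
      · intro v hv
        simp only [Finset.mem_insert, Finset.mem_singleton] at hv
        simp only [Sym2.mem_iff]
        tauto
      · intro e k hek
        simp only [List.mem_append, List.mem_singleton, Prod.mk.injEq] at hek
        rcases hek with hek | ⟨rfl, -⟩
        · exact Or.inl hek
        · exact Or.inr ⟨y, by simp, by simp⟩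
      · intro i
        rcases fin3_cases hab hac hbc i with rfl | rfl | rfl
        · exact ⟨_, List.mem_append_left _ c1, by simpa using d1, by simp⟩
        · exact ⟨_, List.mem_append_left _ c2, by simpa using d10, by simp⟩
        · exact ⟨s(x, y), by simp, by simpa using d2, by simp⟩

/-- Extending the matching by an edge joining two uncovered vertices. -/
lemma extend_st {n r s : ℕ} {h : GameHistory n 3} {V : Finset (Fin n)}
    {M : Finset (Sym2 (Fin n))} {col : Sym2 (Fin n) → Fin 3}
    (st : St r s h V M col) {u v : Fin n} (huv : u ≠ v) (hu : u ∈ V) (hv : v ∈ V)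
    (hu' : ∀ e ∈ M, u ∉ e) (hv' : ∀ e ∈ M, v ∉ e) (d : Fin 3) :
    St r s (h ++ [(s(u, v), d)]) V (insert s(u, v) M) (Function.update col s(u, v) d) := by
  classical
  have hnot : s(u, v) ∉ M := fun hh => hu' _ hh (Sym2.mem_mk_left u v)
  refine ⟨st.hV, ⟨?_, ?_⟩, ?_, ?_, ?_, ?_⟩
  · intro e he
    rcases Finset.mem_insert.1 he with rfl | he
    · simpa using huv
    · exact st.hM.1 e he
  · intro e he f hf hne w hwe hwf
    have aux : ∀ g ∈ M, w ∈ s(u, v) → w ∉ g := by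
      intro g hg hw
      rcases Sym2.mem_iff.1 hw with rfl | rfl
      · exact hu' g hg
      · exact hv' g hg
    rcases Finset.mem_insert.1 (Finset.mem_coe.1 he) with rfl | he <;>
      rcases Finset.mem_insert.1 (Finset.mem_coe.1 hf) with rfl | hf
    · exact hne rfl
    · exact aux f hf hwe hwf
    · exact aux e he hwf hwe
    · exact hne (edge_ne_of_vert st.hM he hf hwe hwf)
  · intro e he w hw
    rcases Finset.mem_insert.1 he with rfl | he
    · rcases Sym2.mem_iff.1 hw with rfl | rfl
      · exact hu
      · exact hv
    · exact st.hMV e he w hw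
  · intro e he
    rcases Finset.mem_insert.1 he with rfl | he
    · simp
    · have hne : e ≠ s(u, v) := fun hh => hnot (hh ▸ he)
      rw [Function.update_of_ne hne]
      exact List.mem_append_left _ (st.hcol e he)
  · intro e c hec hw
    simp only [List.mem_append, List.mem_singleton, Prod.mk.injEq] at hec
    rcases hec with hec | ⟨rfl, -⟩
    · exact Finset.mem_insert_of_mem (st.hfresh e c hec hw)
    · exact Finset.mem_insert_self _ _
  · intro i
    obtain ⟨O, o1, o2, o3, o4⟩ := st.hO i
    exact ⟨O, o1, o2, fun e he => List.mem_append_left _ (o3 e he), o4⟩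

lemma good_all (n r : ℕ) : ∀ m, Good n r m := by
  classical
  intro m
  induction m using Nat.strong_induction_on with
  | _ m ih =>
  intro s h V M col hs st hm
  by_cases hwin : ∃ i, s ≤ (M.filter fun e => col e = i).card
  · obtain ⟨i, hi⟩ := hwin
    obtain ⟨N, hN, hNc⟩ := Finset.exists_subset_card_eq hi
    obtain ⟨O, o1, o2, o3, o4⟩ := st.hO i
    have hNM : ∀ e ∈ N, e ∈ M ∧ col e = i := fun e he => Finset.mem_filter.1 (hN he)
    have hN2 : IsMatchingIn N :=
      ⟨fun e he => st.hM.1 e (hNM e he).1,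
        st.hM.2.mono fun e he => Finset.mem_coe.2 (hNM e (Finset.mem_coe.1 he)).1⟩
    obtain ⟨u1, u2⟩ := matching_union o2 hN2 o4 fun e he => st.hMV e (hNM e he).1
    refine wins_of_has ⟨i, O ∪ N, by omega, u1, ?_⟩ m
    intro e he
    rcases Finset.mem_union.1 he with he | he
    · exact o3 e he
    · have := st.hcol e (hNM e he).1
      rwa [(hNM e he).2] at this
  push Not at hwin
  have hsum : M.card = (M.filter fun e => col e = 0).card + (M.filter fun e => col e = 1).card
      + (M.filter fun e => col e = 2).card := by
    rw [Finset.card_eq_sum_card_fiberwise (f := col) (t := Finset.univ) (by simp)]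
    simp [Fin.sum_univ_three]
  have w0 := hwin 0
  have w1 := hwin 1
  have w2 := hwin 2
  set C := V.filter fun v => ∀ e ∈ M, v ∉ e with hC
  by_cases hC2 : 1 < C.card
  · obtain ⟨u, hu, v, hv, huv⟩ := Finset.one_lt_card.1 hC2
    rw [hC, Finset.mem_filter] at hu hv
    obtain ⟨m, rfl⟩ : ∃ k, m = k + 1 := ⟨m - 1, by omega⟩
    have hnot : s(u, v) ∉ M := fun hh => hu.2 _ hh (Sym2.mem_mk_left u v)
    refine Or.inr ⟨s(u, v), by simpa using huv, ?_, fun d => ?_⟩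
    · intro hmem
      obtain ⟨⟨g, c⟩, hg, hge⟩ := List.mem_map.1 hmem
      simp only at hge
      subst hge
      refine hnot (st.hfresh _ c hg ?_)
      intro w hw
      rcases Sym2.mem_iff.1 hw with rfl | rfl
      · exact hu.1
      · exact hv.1
    · refine ih m (by omega) s _ V _ _ hs (extend_st st huv hu.1 hv.1 hu.2 hv.2 d) ?_
      rw [Finset.card_insert_of_notMem hnot]
      omega
  · have hcov : V ⊆ C ∪ M.biUnion Sym2.toFinset := by
      intro v hv
      by_cases hh : ∀ e ∈ M, v ∉ e
      · exact Finset.mem_union_left _ (Finset.mem_filter.2 ⟨hv, hh⟩)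
      · push Not at hh
        obtain ⟨e, he, hve⟩ := hh
        exact Finset.mem_union_right _ (Finset.mem_biUnion.2 ⟨e, he, Sym2.mem_toFinset.2 hve⟩)
    have hb : (M.biUnion Sym2.toFinset).card ≤ M.card * 2 := by
      refine Finset.card_biUnion_le_card_mul _ _ _ fun e he => ?_
      exact (Sym2.card_toFinset_of_not_isDiag e (st.hM.1 e he)).le
    have hVle := (Finset.card_le_card hcov).trans (Finset.card_union_le _ _)
    have hVc := st.hV
    have pick : ∀ i, 0 < (M.filter fun e => col e = i).card → ∃ p q, s(p, q) ∈ M ∧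
        col s(p, q) = i := by
      intro i hi
      obtain ⟨e, he⟩ := Finset.card_pos.1 hi
      obtain ⟨he, hce⟩ := Finset.mem_filter.1 he
      induction e with
      | _ p q => exact ⟨p, q, he, hce⟩
    obtain ⟨x, x', h1, k1⟩ := pick 0 (by omega)
    obtain ⟨y, y', h2, k2⟩ := pick 1 (by omega)
    obtain ⟨z, z', h3, k3⟩ := pick 2 (by omega)
    obtain ⟨m, rfl⟩ : ∃ k, m = k + 2 := ⟨m - 2, by omega⟩
    have c1 := st.hcol _ h1
    have c2 := st.hcol _ h2
    have c3 := st.hcol _ h3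
    rw [k1] at c1
    rw [k2] at c2
    rw [k3] at c3
    refine gadget (by omega) st (ih m (by omega)) (ih (m + 1) (by omega)) x x' y y' z z' 0 1 2
      (by decide) (by decide) (by decide) h1 h2 h3 ?_ c1 c2 c3 (by omega)
    have n1 := st.hM.1 _ h1
    have n2 := st.hM.1 _ h2
    have n3 := st.hM.1 _ h3
    rw [Sym2.mk_isDiag_iff] at n1 n2 n3
    have disj : ∀ {e f : Sym2 (Fin n)}, e ∈ M → f ∈ M → col e ≠ col f →
        ∀ p ∈ e, ∀ q ∈ f, p ≠ q := by
      intro e f he hf hne p hp q hq hpq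
      subst hpq
      exact hne (congrArg col (edge_ne_of_vert st.hM he hf hp hq))
    have e12 := disj h1 h2 (by rw [k1, k2]; decide)
    have e13 := disj h1 h3 (by rw [k1, k3]; decide)
    have e23 := disj h2 h3 (by rw [k2, k3]; decide)
    simp only [Sym2.mem_iff] at e12 e13 e23
    simp only [List.nodup_cons, List.mem_cons, List.not_mem_nil, or_false, not_or]
    grind

/-- For `r ≥ 1`, `R̃₃(rK₂; 4r − 2) ≤ 5r − 4`. -/
theorem restrictedOnlineRamsey_three_colours_upper (r : ℕ) (hr : 1 ≤ r) :
    restrictedOnlineRamsey (4 * r - 2) 3 (fun _ => r) ≤ 5 * r - 4 := by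
  refine Nat.sInf_le ?_
  have hn : Nonempty (Sym2 (Fin (4 * r - 2))) :=
    ⟨s(⟨0, by omega⟩, ⟨0, by omega⟩)⟩
  refine builderWins_of_wins ?_ hn ?_
  · obtain ⟨k, rfl⟩ : ∃ k, r = k + 1 := ⟨r - 1, by omega⟩
    have h1 : 4 * (k + 1) - 2 = 4 * k + 2 := by omega
    rw [h1, Nat.choose_two_right, Nat.le_div_iff_mul_le (by norm_num)]
    have h2 : 4 * k + 2 - 1 = 4 * k + 1 := by omega
    have h3 : 5 * (k + 1) - 4 = 5 * k + 1 := by omega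
    rw [h2, h3]
    nlinarith
  · refine good_all _ r _ r [] Finset.univ ∅ (fun _ => 0) hr ?_ ?_
    · refine ⟨?_, ⟨by simp, by simp⟩, by simp, by simp, by simp, ?_⟩
      · rw [Finset.card_univ, Fintype.card_fin]
        omega
      · intro i
        exact ⟨∅, by simp, ⟨by simp, by simp⟩, by simp, by simp⟩
    · simp
      omega
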